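/- Let A ∈ ℝ^{m×n} have unit ℓ₂-norm columns and satisfy the RIP of order K+1 with constant δ ≤ 1/2. Let x ∈ ℝ^n be K-sparse with support S = supp(x), let S' be a proper subset of S, set r = P_{S'}^⊥ A x, let j ∈ {1,…,n} \ S, and put t = ‖x_{S\S'}‖₂ · |⟨r, a_j⟩| / ‖P_{S'}^⊥ a_j‖₂. Then 2t ≤ (1 + ‖P_{S'}^⊥ a_j‖₂²) · δ · ‖r‖₂². -/

import Mathlib

open Finset

noncomputable section

/-- The support of a vector as a `Finset`. -/
def vsupp {n : ℕ} (x : Fin n → ℝ) : Finset (Fin n) :=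
  Finset.univ.filter (fun i => x i ≠ 0)

/-- `A` satisfies the restricted isometry property of order `r` with constant `δ`. -/
def RIP {m n : ℕ} (A : Matrix (Fin m) (Fin n) ℝ) (r : ℕ) (δ : ℝ) : Prop :=
  ∀ x : Fin n → ℝ, (vsupp x).card ≤ r →
    (1 - δ) * (∑ i, x i ^ 2) ≤ (∑ i, (A.mulVec x) i ^ 2) ∧
      (∑ i, (A.mulVec x) i ^ 2) ≤ (1 + δ) * (∑ i, x i ^ 2)

/-- The `j`-th column of `A`. -/
def col {m n : ℕ} (A : Matrix (Fin m) (Fin n) ℝ) (j : Fin n) : Fin m → ℝ :=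
  fun i => A i j

/-- Euclidean dot product. -/
def dot {m : ℕ} (u v : Fin m → ℝ) : ℝ := ∑ i, u i * v i

/-- Squared Euclidean norm. -/
def nsq {m : ℕ} (v : Fin m → ℝ) : ℝ := ∑ i, v i ^ 2

/-- Euclidean norm. -/
def enorm {m : ℕ} (v : Fin m → ℝ) : ℝ := Real.sqrt (nsq v)

/-- Squared norm of the restriction of `x` to `T`. -/
def rsq {n : ℕ} (x : Fin n → ℝ) (T : Finset (Fin n)) : ℝ := ∑ i ∈ T, x i ^ 2

/-- Norm of the restriction of `x` to `T`. -/
def rnorm {n : ℕ} (x : Fin n → ℝ) (T : Finset (Fin n)) : ℝ := Real.sqrt (rsq x T)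

/-- Span of the columns of `A` indexed by `J`. -/
def colSpan {m n : ℕ} (A : Matrix (Fin m) (Fin n) ℝ) (J : Finset (Fin n)) :
    Submodule ℝ (EuclideanSpace ℝ (Fin m)) :=
  Submodule.span ℝ ((fun j => (WithLp.equiv 2 (Fin m → ℝ)).symm (col A j)) '' (J : Set (Fin n)))

/-- The projection `P_J^⊥ v` of `v` onto the orthogonal complement of the span of the
columns of `A` indexed by `J`. -/
def projPerp {m n : ℕ} (A : Matrix (Fin m) (Fin n) ℝ) (J : Finset (Fin n)) (v : Fin m → ℝ) :
    Fin m → ℝ :=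
  v - WithLp.equiv 2 (Fin m → ℝ)
    ((Submodule.orthogonalProjectionOnto (colSpan A J) ((WithLp.equiv 2 (Fin m → ℝ)).symm v) :
      EuclideanSpace ℝ (Fin m)))

/-- The OLS selection criterion value for index `j`, given measurements `y` and current
estimated support `Sk`. -/
def olsQuot {m n : ℕ} (A : Matrix (Fin m) (Fin n) ℝ) (y : Fin m → ℝ) (Sk : Finset (Fin n))
    (j : Fin n) : ℝ :=
  |dot (projPerp A Sk y) (col A j)| / _root_.enorm (projPerp A Sk (col A j))

/-- The estimated support of OLS after `k` iterations (ties broken towards smaller index). -/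
def olsSupp {m n : ℕ} (A : Matrix (Fin m) (Fin n) ℝ) (y : Fin m → ℝ) : ℕ → Finset (Fin n)
  | 0 => ∅
  | k + 1 =>
    let Sk := olsSupp A y k
    let cand := (Finset.univ \ Sk).filter
      (fun j => ∀ i ∈ Finset.univ \ Sk, olsQuot A y Sk i ≤ olsQuot A y Sk j)
    if h : cand.Nonempty then insert (cand.min' h) Sk else Sk

/-- The constant `C_K` from the paper. -/
def CK (K : ℕ) : ℝ :=
  if K = 1 then 1 else if K = 2 then 2/3 else if K = 3 then 4/7 else 1 / Real.sqrt K

/-!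
Write `u = P_{S'}^⊥ A x`, `v = P_{S'}^⊥ a_j` and `X = ‖x_{S \ S'}‖`. The map `P_{S'}^⊥ A` inherits
the RIP on vectors `w` supported off `S'`: the projection only shrinks norms, and
`P_{S'}^⊥ A w = A (w - z)` for some `z` supported on `S'`, where `‖w - z‖ ≥ ‖w‖`. Hence
`‖a u + b v‖²` lies between `(1 - δ) (a² X² + b²)` and `(1 + δ) (a² X² + b²)`, and the discriminants
of the two differences bound `⟪u, v⟫²` in terms of `‖u‖²`, `X²` and `e = 1 - ‖v‖² ∈ [0, δ]`.
Together these bounds give `X² ⟪u, v⟫² ≤ (1 - 2 e) δ² ‖u‖⁴`, and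
`4 (1 - 2 e) ≤ ‖v‖² (1 + ‖v‖²)²`.
-/

section Scalar

lemma sq_le_mul_of_quadratic_nonneg {a b c : ℝ} (h : ∀ t : ℝ, 0 ≤ a * t ^ 2 + 2 * b * t + c) :
    b ^ 2 ≤ a * c := by
  have hdiscrim : discrim a (2 * b) c ≤ 0 := discrim_le_zero fun t => by
    simpa only [sq] using h t
  unfold discrim at hdiscrim
  linarith

lemma four_mul_two_mul_sub_one_le {P : ℝ} (hP : 0 ≤ P) : 4 * (2 * P - 1) ≤ P * (1 + P) ^ 2 := by
  have hfactor : P * (1 + P) ^ 2 - 4 * (2 * P - 1) = (P - 1) ^ 2 * (P + 4) := by ring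
  rw [← sub_nonneg, hfactor]
  positivity

variable {δ e ξ ρ c : ℝ}

lemma one_add_sq_mul_sq_le (hξ : 0 ≤ ξ) (he0 : 0 ≤ e) (heδ : e ≤ δ) (he : e ≤ 1 - 2 * δ)
    (hlower : c ^ 2 ≤ (ρ - (1 - δ) * ξ) * (δ - e)) (hupper : c ^ 2 ≤ ((1 + δ) * ξ - ρ) * (δ + e)) :
    (1 + e) ^ 2 * (ξ * c ^ 2) ≤ (δ ^ 2 - e ^ 2) * ρ ^ 2 := by
  have hgap : 0 ≤ δ ^ 2 - e ^ 2 := by nlinarith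
  -- The two bounds on `c ^ 2` cross at `ρ = (1 + e) * ξ`.
  rcases le_total ((1 + e) * ξ) ρ with hρ | hρ
  · have hc : c ^ 2 ≤ (δ ^ 2 - e ^ 2) * ξ := by nlinarith
    calc (1 + e) ^ 2 * (ξ * c ^ 2) ≤ (1 + e) ^ 2 * (ξ * ((δ ^ 2 - e ^ 2) * ξ)) := by gcongr
      _ = (δ ^ 2 - e ^ 2) * ((1 + e) * ξ) ^ 2 := by ring
      _ ≤ (δ ^ 2 - e ^ 2) * ρ ^ 2 := by gcongr
  · have hdiff : (δ ^ 2 - e ^ 2) * ρ ^ 2 - (1 + e) ^ 2 * (ξ * ((ρ - (1 - δ) * ξ) * (δ - e))) =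
        (δ - e) * ((1 + e) * ξ * ((1 + e) * ξ - ρ) * (1 - 2 * δ - e)
          + (δ + e) * ((1 + e) * ξ - ρ) ^ 2) := by ring
    calc (1 + e) ^ 2 * (ξ * c ^ 2)
        ≤ (1 + e) ^ 2 * (ξ * ((ρ - (1 - δ) * ξ) * (δ - e))) := by gcongr
      _ ≤ (δ ^ 2 - e ^ 2) * ρ ^ 2 := by
          rw [← sub_nonneg, hdiff]
          have := sub_nonneg.2 heδ
          have := sub_nonneg.2 he
          have := sub_nonneg.2 hρ
          have := he0.trans heδ
          positivity

lemma sq_sub_sq_le_one_add_sq_mul (he0 : 0 ≤ e) (heδ : e ≤ δ) (hδ : δ ≤ 1 / 2) :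
    δ ^ 2 - e ^ 2 ≤ (1 + e) ^ 2 * ((1 - 2 * e) * δ ^ 2) := by
  have hδsq : δ ^ 2 ≤ (1 / 2) ^ 2 := by gcongr; linarith
  have : 0 ≤ e ^ 2 * (1 - (3 + 2 * e) * δ ^ 2) := by
    refine mul_nonneg (sq_nonneg e) ?_
    nlinarith [mul_le_mul_of_nonneg_left hδsq (by linarith : 0 ≤ 3 + 2 * e)]
  linarith

lemma sub_le_four_mul_of_one_sub_two_mul_le (hδ0 : 0 ≤ δ) (hδ : δ ≤ 1 / 2) (he : 1 - 2 * δ ≤ e) :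
    δ - e ≤ 4 * ((1 - 2 * e) * δ ^ 2) * (1 - δ) := by
  have hdiff : 4 * ((1 - 2 * e) * δ ^ 2) * (1 - δ) - (δ - e) =
      (1 - 2 * δ) * ((e - δ * (1 - 2 * δ)) + e * (2 * δ * (1 - 2 * δ))) := by ring
  have hδ' : 0 ≤ 1 - 2 * δ := by linarith
  have he0 : 0 ≤ e := hδ'.trans he
  have : 0 ≤ e - δ * (1 - 2 * δ) := by nlinarith
  rw [← sub_nonneg, hdiff]
  positivity

lemma mul_sq_le_one_sub_two_mul (hδ : δ ≤ 1 / 2) (hξ : 0 ≤ ξ) (he0 : 0 ≤ e) (heδ : e ≤ δ)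
    (hρ : (1 - δ) * ξ ≤ ρ)
    (hlower : c ^ 2 ≤ (ρ - (1 - δ) * ξ) * (δ - e)) (hupper : c ^ 2 ≤ ((1 + δ) * ξ - ρ) * (δ + e)) :
    ξ * c ^ 2 ≤ (1 - 2 * e) * δ ^ 2 * ρ ^ 2 := by
  have hcoeff : 0 ≤ (1 - 2 * e) * δ ^ 2 := mul_nonneg (by linarith) (sq_nonneg δ)
  rcases le_total e (1 - 2 * δ) with he | he
  · refine le_of_mul_le_mul_left ?_ (by positivity : 0 < (1 + e) ^ 2)
    calc (1 + e) ^ 2 * (ξ * c ^ 2) ≤ (δ ^ 2 - e ^ 2) * ρ ^ 2 :=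
          one_add_sq_mul_sq_le hξ he0 heδ he hlower hupper
      _ ≤ (1 + e) ^ 2 * ((1 - 2 * e) * δ ^ 2) * ρ ^ 2 := by
          gcongr; exact sq_sub_sq_le_one_add_sq_mul he0 heδ hδ
      _ = (1 + e) ^ 2 * ((1 - 2 * e) * δ ^ 2 * ρ ^ 2) := by ring
  · have := sub_nonneg.2 hρ
    calc ξ * c ^ 2 ≤ ξ * ((ρ - (1 - δ) * ξ) * (δ - e)) := by gcongr
      _ ≤ ξ * ((ρ - (1 - δ) * ξ) * (4 * ((1 - 2 * e) * δ ^ 2) * (1 - δ))) := by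
          gcongr; exact sub_le_four_mul_of_one_sub_two_mul_le (he0.trans heδ) hδ he
      _ = (1 - 2 * e) * δ ^ 2 * (4 * ((1 - δ) * ξ) * (ρ - (1 - δ) * ξ)) := by ring
      _ ≤ (1 - 2 * e) * δ ^ 2 * ((1 - δ) * ξ + (ρ - (1 - δ) * ξ)) ^ 2 := by
          gcongr; exact four_mul_le_sq_add _ _
      _ = (1 - 2 * e) * δ ^ 2 * ρ ^ 2 := by rw [add_sub_cancel]

end Scalar

section NearDiagonal

open scoped InnerProductSpace

variable {E : Type*} [NormedAddCommGroup E] [InnerProductSpace ℝ E]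

/-- The Gram form `(a, b) ↦ ‖a u + b v‖²` of the pair `u, v` agrees with the diagonal form
`a² X² + b²` up to a relative error `δ`. The RIP gives this for the images `u, v` of two orthogonal
sparse vectors of lengths `X` and `1`. -/
def NearDiagonal (δ X : ℝ) (u v : E) : Prop :=
  ∀ a b : ℝ, (1 - δ) * ((a * X) ^ 2 + b ^ 2) ≤ ‖a • u + b • v‖ ^ 2 ∧
    ‖a • u + b • v‖ ^ 2 ≤ (1 + δ) * ((a * X) ^ 2 + b ^ 2)

lemma norm_smul_add_sq (a : ℝ) (u v : E) :
    ‖a • u + v‖ ^ 2 = ‖u‖ ^ 2 * a ^ 2 + 2 * ⟪u, v⟫_ℝ * a + ‖v‖ ^ 2 := by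
  rw [norm_add_sq_real, norm_smul, mul_pow, Real.norm_eq_abs, sq_abs, real_inner_smul_left]
  ring

namespace NearDiagonal

variable {δ X : ℝ} {u v : E}

lemma le_norm_sq_left (h : NearDiagonal δ X u v) : (1 - δ) * X ^ 2 ≤ ‖u‖ ^ 2 := by
  simpa using (h 1 0).1

lemma le_norm_sq_right (h : NearDiagonal δ X u v) : 1 - δ ≤ ‖v‖ ^ 2 := by
  simpa using (h 0 1).1

lemma norm_right_pos (h : NearDiagonal δ X u v) (hδ : δ < 1) : 0 < ‖v‖ :=
  (norm_nonneg v).lt_of_ne' (sq_pos_iff.1 ((sub_pos.2 hδ).trans_le h.le_norm_sq_right))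

lemma inner_sq_le_of_lower (h : NearDiagonal δ X u v) :
    ⟪u, v⟫_ℝ ^ 2 ≤ (‖u‖ ^ 2 - (1 - δ) * X ^ 2) * (‖v‖ ^ 2 - (1 - δ)) := by
  refine sq_le_mul_of_quadratic_nonneg fun t => ?_
  have hlower := (h t 1).1
  rw [one_smul, norm_smul_add_sq] at hlower
  linarith

lemma inner_sq_le_of_upper (h : NearDiagonal δ X u v) :
    ⟪u, v⟫_ℝ ^ 2 ≤ ((1 + δ) * X ^ 2 - ‖u‖ ^ 2) * ((1 + δ) - ‖v‖ ^ 2) := by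
  rw [← neg_sq]
  refine sq_le_mul_of_quadratic_nonneg fun t => ?_
  have hupper := (h t 1).2
  rw [one_smul, norm_smul_add_sq] at hupper
  linarith

lemma sq_mul_inner_sq_le (h : NearDiagonal δ X u v) (hδ : δ ≤ 1 / 2) (hv : ‖v‖ ≤ 1) :
    X ^ 2 * ⟪u, v⟫_ℝ ^ 2 ≤ (2 * ‖v‖ ^ 2 - 1) * (δ * ‖u‖ ^ 2) ^ 2 := by
  have hv_sq : ‖v‖ ^ 2 ≤ 1 := pow_le_one₀ (norm_nonneg v) hv
  have hbound := mul_sq_le_one_sub_two_mul (e := 1 - ‖v‖ ^ 2) (c := ⟪u, v⟫_ℝ) hδ (sq_nonneg X)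
    (by linarith) (by linarith [h.le_norm_sq_right]) h.le_norm_sq_left
    (by linarith [h.inner_sq_le_of_lower]) (by linarith [h.inner_sq_le_of_upper])
  linarith

theorem two_mul_mul_abs_inner_le (h : NearDiagonal δ X u v) (hδ : δ ≤ 1 / 2) (hv : ‖v‖ ≤ 1) :
    2 * (X * |⟪u, v⟫_ℝ|) ≤ ‖v‖ * ((1 + ‖v‖ ^ 2) * δ * ‖u‖ ^ 2) := by
  have hδ0 : 0 ≤ δ := by
    linarith [h.le_norm_sq_right, pow_le_one₀ (n := 2) (norm_nonneg v) hv]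
  refine le_of_sq_le_sq ?_ (by positivity)
  calc (2 * (X * |⟪u, v⟫_ℝ|)) ^ 2 = 4 * (X ^ 2 * ⟪u, v⟫_ℝ ^ 2) := by
        rw [mul_pow, mul_pow, sq_abs]; norm_num
    _ ≤ 4 * ((2 * ‖v‖ ^ 2 - 1) * (δ * ‖u‖ ^ 2) ^ 2) :=
        mul_le_mul_of_nonneg_left (h.sq_mul_inner_sq_le hδ hv) zero_le_four
    _ = 4 * (2 * ‖v‖ ^ 2 - 1) * (δ * ‖u‖ ^ 2) ^ 2 := by ring
    _ ≤ ‖v‖ ^ 2 * (1 + ‖v‖ ^ 2) ^ 2 * (δ * ‖u‖ ^ 2) ^ 2 :=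
        mul_le_mul_of_nonneg_right (four_mul_two_mul_sub_one_le (sq_nonneg _)) (sq_nonneg _)
    _ = (‖v‖ * ((1 + ‖v‖ ^ 2) * δ * ‖u‖ ^ 2)) ^ 2 := by ring

end NearDiagonal

end NearDiagonal

section Euclidean

open WithLp

variable {n : ℕ}

lemma nsq_eq_norm_sq (v : Fin n → ℝ) : nsq v = ‖toLp 2 v‖ ^ 2 :=
  (EuclideanSpace.real_norm_sq_eq _).symm

lemma enorm_eq_norm (v : Fin n → ℝ) : _root_.enorm v = ‖toLp 2 v‖ := by
  rw [_root_.enorm, nsq_eq_norm_sq, Real.sqrt_sq (norm_nonneg _)]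

lemma dot_eq_inner (u v : Fin n → ℝ) : dot u v = inner ℝ (toLp 2 u) (toLp 2 v) := by
  rw [EuclideanSpace.inner_toLp_toLp, star_trivial, dotProduct_comm]
  rfl

lemma mem_vsupp {x : Fin n → ℝ} {i : Fin n} : i ∈ vsupp x ↔ x i ≠ 0 := by
  simp [vsupp]

lemma nsq_indicator_compl (x : Fin n → ℝ) (J : Finset (Fin n)) :
    nsq ((J : Set (Fin n))ᶜ.indicator x) = rnorm x (vsupp x \ J) ^ 2 := by
  have hrsq : 0 ≤ rsq x (vsupp x \ J) := sum_nonneg fun i _ => sq_nonneg (x i)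
  rw [rnorm, Real.sq_sqrt hrsq]
  symm
  refine sum_subset_zero_on_sdiff (subset_univ _) (fun i hi => ?_) (fun i hi => ?_)
  · by_cases hiJ : i ∈ J <;> simp_all [mem_vsupp]
  · simp_all

lemma nsq_smul_add_smul_single (a b : ℝ) {x : Fin n → ℝ} {j : Fin n} (hj : x j = 0) :
    nsq (a • x + b • Pi.single j 1) = a ^ 2 * nsq x + b ^ 2 := by
  have hcoord (i : Fin n) : (a • x + b • Pi.single j (1 : ℝ) : Fin n → ℝ) i ^ 2 =
      a ^ 2 * x i ^ 2 + if i = j then b ^ 2 else 0 := by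
    by_cases hij : i = j
    · subst hij; simp [hj]
    · simp [hij, mul_pow]
  simp only [nsq, hcoord, sum_add_distrib, ← mul_sum, sum_ite_eq', mem_univ, if_true]

lemma nsq_le_nsq_sub_of_disjoint_vsupp {x z : Fin n → ℝ} (h : Disjoint (vsupp x) (vsupp z)) :
    nsq x ≤ nsq (x - z) := by
  refine sum_le_sum fun i _ => ?_
  by_cases hi : x i = 0
  · simpa [hi] using sq_nonneg (z i)
  · have hz : z i = 0 := by
      simpa only [mem_vsupp, not_not] using disjoint_left.1 h (mem_vsupp.2 hi)
    simp [hz]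

end Euclidean

section ProjPerp

open WithLp

variable {m n : ℕ} (A : Matrix (Fin m) (Fin n) ℝ) (J : Finset (Fin n))

lemma mulVec_single_one_eq_col (j : Fin n) : A.mulVec (Pi.single j 1) = col A j :=
  A.mulVec_single_one j

lemma toLp_mulVec_eq_linearCombination (z : Fin n →₀ ℝ) :
    toLp 2 (A.mulVec z) = Finsupp.linearCombination ℝ (fun j => toLp 2 (col A j)) z := by
  rw [Finsupp.linearCombination_apply, Finsupp.sum_fintype _ _ (by simp)]
  ext i
  simp [Matrix.mulVec, dotProduct, col, mul_comm]

lemma mem_colSpan_iff {v : EuclideanSpace ℝ (Fin m)} :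
    v ∈ colSpan A J ↔ ∃ z, vsupp z ⊆ J ∧ toLp 2 (A.mulVec z) = v := by
  have hsupp (l : Fin n →₀ ℝ) : l ∈ Finsupp.supported ℝ ℝ (J : Set (Fin n)) ↔ vsupp l ⊆ J := by
    rw [Finsupp.mem_supported, coe_subset]
    simp only [subset_iff, Finsupp.mem_support_iff, mem_vsupp]
  refine (Finsupp.mem_span_image_iff_linearCombination ℝ).trans ?_
  refine Finsupp.equivFunOnFinite.exists_congr fun l => ?_
  change _ ↔ vsupp l ⊆ J ∧ toLp 2 (A.mulVec l) = v
  rw [hsupp, toLp_mulVec_eq_linearCombination]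
  rfl

lemma toLp_projPerp (v : Fin m → ℝ) :
    toLp 2 (projPerp A J v) = (colSpan A J)ᗮ.starProjection (toLp 2 v) := by
  rw [Submodule.starProjection_orthogonal_val]
  rfl

lemma exists_projPerp_mulVec_eq_mulVec_sub (w : Fin n → ℝ) :
    ∃ z, vsupp z ⊆ J ∧ projPerp A J (A.mulVec w) = A.mulVec (w - z) := by
  obtain ⟨z, hzJ, hz⟩ := (mem_colSpan_iff A J).1
    ((colSpan A J).starProjection_apply_mem (toLp 2 (A.mulVec w)))
  refine ⟨z, hzJ, toLp_injective 2 ?_⟩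
  rw [toLp_projPerp, Submodule.starProjection_orthogonal_val, ← hz, Matrix.mulVec_sub, toLp_sub]

lemma projPerp_smul_add_smul (a b : ℝ) (u v : Fin m → ℝ) :
    projPerp A J (a • u + b • v) = a • projPerp A J u + b • projPerp A J v := by
  apply toLp_injective 2
  simp only [toLp_projPerp, toLp_add, toLp_smul, map_add, map_smul]

lemma projPerp_mulVec_indicator_compl (x : Fin n → ℝ) :
    projPerp A J (A.mulVec ((J : Set (Fin n))ᶜ.indicator x)) = projPerp A J (A.mulVec x) := by
  have hsupp : vsupp ((J : Set (Fin n)).indicator x) ⊆ J := fun i hi => by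
    by_contra hiJ
    simp_all [mem_vsupp]
  have hzero : (colSpan A J)ᗮ.starProjection
      (toLp 2 (A.mulVec ((J : Set (Fin n)).indicator x))) = 0 :=
    (Submodule.starProjection_apply_eq_zero_iff _).2
      (Submodule.le_orthogonal_orthogonal _ ((mem_colSpan_iff A J).2 ⟨_, hsupp, rfl⟩))
  apply toLp_injective 2
  conv_rhs => rw [← Set.indicator_self_add_compl (J : Set (Fin n)) x]
  rw [Matrix.mulVec_add, toLp_projPerp, toLp_projPerp, toLp_add, map_add, hzero, zero_add]

lemma nsq_projPerp_le (v : Fin m → ℝ) : nsq (projPerp A J v) ≤ nsq v := by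
  rw [nsq_eq_norm_sq, nsq_eq_norm_sq, toLp_projPerp]
  gcongr
  exact Submodule.norm_starProjection_apply_le _ _

lemma dot_projPerp_eq_inner (u v : Fin m → ℝ) :
    dot (projPerp A J u) v = inner ℝ (toLp 2 (projPerp A J u)) (toLp 2 (projPerp A J v)) := by
  rw [dot_eq_inner, toLp_projPerp, toLp_projPerp, ← Submodule.inner_starProjection_left_eq_right,
    Submodule.starProjection_eq_self_iff.2 (Submodule.starProjection_apply_mem _ _)]

end ProjPerp

namespace RIP

open WithLp

variable {m n k : ℕ} {A : Matrix (Fin m) (Fin n) ℝ} {δ : ℝ} {J : Finset (Fin n)}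

lemma nsq_projPerp_mulVec_bounds (hA : RIP A k δ) (hδ : δ ≤ 1) {w : Fin n → ℝ}
    (hdisj : Disjoint (vsupp w) J) (hcard : #(vsupp w ∪ J) ≤ k) :
    (1 - δ) * nsq w ≤ nsq (projPerp A J (A.mulVec w)) ∧
      nsq (projPerp A J (A.mulVec w)) ≤ (1 + δ) * nsq w := by
  constructor
  · obtain ⟨z, hzJ, hz⟩ := exists_projPerp_mulVec_eq_mulVec_sub A J w
    have hsupp : vsupp (w - z) ⊆ vsupp w ∪ J := fun i hi => by
      by_contra hiJ
      have hzi : z i = 0 := by_contra fun h => hiJ (mem_union_right _ (hzJ (mem_vsupp.2 h)))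
      simp_all [mem_vsupp]
    calc (1 - δ) * nsq w ≤ (1 - δ) * nsq (w - z) :=
          mul_le_mul_of_nonneg_left
            (nsq_le_nsq_sub_of_disjoint_vsupp (hdisj.mono_right hzJ)) (sub_nonneg.2 hδ)
      _ ≤ nsq (A.mulVec (w - z)) := (hA _ ((card_le_card hsupp).trans hcard)).1
      _ = nsq (projPerp A J (A.mulVec w)) := by rw [hz]
  · exact (nsq_projPerp_le A J _).trans
      (hA w ((card_le_card subset_union_left).trans hcard)).2

theorem nearDiagonal_projPerp (hA : RIP A k δ) (hδ : δ ≤ 1) {x : Fin n → ℝ} {j : Fin n}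
    (hj : j ∉ vsupp x ∪ J) (hcard : #(vsupp x ∪ J) < k) :
    NearDiagonal δ (rnorm x (vsupp x \ J)) (toLp 2 (projPerp A J (A.mulVec x)))
      (toLp 2 (projPerp A J (col A j))) := by
  intro a b
  set w : Fin n → ℝ := a • (J : Set (Fin n))ᶜ.indicator x + b • Pi.single j 1 with hw
  obtain ⟨hxj, hjJ⟩ : x j = 0 ∧ j ∉ J := by simpa [mem_vsupp] using hj
  have hsupp : vsupp w ⊆ insert j (vsupp x) \ J := fun i hi => by
    by_cases hij : i = j <;> by_cases hiJ : i ∈ J <;> simp_all [mem_vsupp]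
  have hdisj : Disjoint (vsupp w) J := disjoint_sdiff_self_left.mono_left hsupp
  have hcard_w : #(vsupp w ∪ J) ≤ k := calc
    #(vsupp w ∪ J) ≤ #(insert j (vsupp x ∪ J)) := by
      rw [← insert_union]
      exact card_le_card (union_subset_union_left (hsupp.trans sdiff_subset))
    _ ≤ k := (card_insert_le _ _).trans hcard
  have himage : a • toLp 2 (projPerp A J (A.mulVec x)) + b • toLp 2 (projPerp A J (col A j)) =
      toLp 2 (projPerp A J (A.mulVec w)) := by
    rw [hw, Matrix.mulVec_add, Matrix.mulVec_smul, Matrix.mulVec_smul, projPerp_smul_add_smul,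
      projPerp_mulVec_indicator_compl, mulVec_single_one_eq_col, toLp_add, toLp_smul, toLp_smul]
  have hnsq_w : nsq w = (a * rnorm x (vsupp x \ J)) ^ 2 + b ^ 2 := by
    rw [hw, nsq_smul_add_smul_single a b (by simp [hxj]), nsq_indicator_compl, mul_pow]
  rw [himage, ← nsq_eq_norm_sq, ← hnsq_w]
  exact hA.nsq_projPerp_mulVec_bounds hδ hdisj hcard_w

end RIP

theorem stmt4_general {m n k : ℕ} (A : Matrix (Fin m) (Fin n) ℝ) (δ : ℝ) (hδ : δ ≤ 1 / 2)
    (hRIP : RIP A k δ) (x : Fin n → ℝ) (J : Finset (Fin n)) (hcard : #(vsupp x ∪ J) < k)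
    (j : Fin n) (hj : j ∉ vsupp x ∪ J) (hcol : nsq (col A j) ≤ 1) :
    2 * (rnorm x (vsupp x \ J) * |dot (projPerp A J (A.mulVec x)) (col A j)| /
        _root_.enorm (projPerp A J (col A j))) ≤
      (1 + nsq (projPerp A J (col A j))) * δ * nsq (projPerp A J (A.mulVec x)) := by
  have hpair := hRIP.nearDiagonal_projPerp (by linarith) hj hcard
  have hv_le : ‖WithLp.toLp 2 (projPerp A J (col A j))‖ ≤ 1 := by
    rw [← sq_le_one_iff₀ (norm_nonneg _), ← nsq_eq_norm_sq]
    exact (nsq_projPerp_le A J _).trans hcol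
  rw [dot_projPerp_eq_inner, enorm_eq_norm, nsq_eq_norm_sq, nsq_eq_norm_sq, ← mul_div_assoc,
    div_le_iff₀' (hpair.norm_right_pos (by linarith))]
  exact hpair.two_mul_mul_abs_inner_le hδ hv_le

/-- under unit-norm columns and RIP of order `K+1` with `δ ≤ 1/2`,
with `t = ‖x_{S\S'}‖₂ |⟨r, a_j⟩| / ‖P_{S'}^⊥ a_j‖₂`, one has
`2t ≤ (1 + ‖P_{S'}^⊥ a_j‖₂²) δ ‖r‖₂²`. -/
theorem stmt4 {m n K : ℕ} (A : Matrix (Fin m) (Fin n) ℝ) (δ : ℝ)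
    (hδ0 : 0 ≤ δ) (hδ : δ ≤ 1 / 2)
    (hcols : ∀ j, nsq (col A j) = 1)
    (hRIP : RIP A (K + 1) δ)
    (x : Fin n → ℝ) (S : Finset (Fin n)) (hS : vsupp x = S) (hK : S.card ≤ K)
    (S' : Finset (Fin n)) (hS' : S' ⊂ S)
    (r : Fin m → ℝ) (hr : r = projPerp A S' (A.mulVec x))
    (j : Fin n) (hj : j ∉ S)
    (t : ℝ) (ht : t = rnorm x (S \ S') * |dot r (col A j)| / _root_.enorm (projPerp A S' (col A j))) :
    2 * t ≤ (1 + nsq (projPerp A S' (col A j))) * δ * nsq r := by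
  subst hr ht hS
  have hunion : vsupp x ∪ S' = vsupp x := union_eq_left.2 hS'.subset
  exact stmt4_general A δ hδ hRIP x S' (by rw [hunion]; omega) j (by rwa [hunion]) (hcols j).le
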